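/- Let n ≥ 3, let P be the explicit irreversible transition matrix defined from θ ∈ ℝⁿ, and fix k with 1 < k < n. Let θ' ∈ ℝ^{n−1} be the vector obtained from θ by deleting its k-th coordinate (θ' is still positive and nondecreasing; the defining formula of the explicit matrix is homogeneous of degree 0 in θ, so it applies to θ' without renormalization). Define the matrix Q with rows and columns indexed by {1, …, n} \ {k} by Q_{ij} = P_{ij} + P_{ik} P_{kj} / (1 − P_{kk}) (note that P_{kk} < 1). Then Q coincides with the explicit irreversible transition matrix defined from θ'; that is, the chain obtained by ignoring state k has a transition matrix of the same explicit form. -/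

import Mathlib

/-- Off-last-column entries of the explicit irreversible transition matrix built from a
positive nondecreasing vector `θ` on states `1, …, n` (empty products are `1`). -/
noncomputable def explicitAux (n : ℕ) (θ : ℕ → ℝ) (i j : ℕ) : ℝ :=
  if i = n then
    (θ j * (θ 1 + θ n)) / (θ n * (θ j + θ n)) *
      ∏ k ∈ Finset.Icc 1 (j - 1), (θ n - θ k) / (θ k + θ n)
  else if j < i then 0
  else if j = i then (θ i - θ 1) / (θ i + θ n)
  else (2 * θ j * (θ 1 + θ n)) / ((θ i + θ n) * (θ j + θ n)) *
      ∏ k ∈ Finset.Icc (i + 1) (j - 1), (θ n - θ k) / (θ k + θ n)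

/-- The explicit irreversible transition matrix: the last column is
`P_{im} = 1 − ∑_{k=1}^{m−1} P_{ik}` and the other entries are `explicitAux`. -/
noncomputable def explicitP (n : ℕ) (θ : ℕ → ℝ) (i j : ℕ) : ℝ :=
  if j = n then 1 - ∑ k ∈ Finset.Icc 1 (n - 1), explicitAux n θ i k
  else explicitAux n θ i j

/-!
The explicit chain is a lazy cyclic scan: at state `i` it stays put with probability `1 - e i`,
where `e i = (θ 1 + θ n) / (θ i + θ n)`, and otherwise runs through `i + 1, i + 2, …` (through
`1, 2, …` if `i = n`), stopping at `j` with probability `w j = 2 * θ j / (θ j + θ n)` and passing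
over it with probability `1 - w j = (θ n - θ j) / (θ j + θ n)`. Since `w n = 1`, a scan never runs
past `n`, which accounts for the last column. A scan that stops at an ignored state `k` is resumed
from `k + 1`, exactly as if it had passed over `k`; hence ignoring `k` erases `k` from every scan
and leaves the remaining `e i` and `w j` unchanged.
-/

/-- The increasing enumeration of the indices other than `k`, identifying the states of the
reduced chain with those of the original one. -/
def skip (k m : ℕ) : ℕ := if m < k then m else m + 1

theorem skip_of_lt {k m : ℕ} (h : m < k) : skip k m = m := if_pos h

theorem skip_of_le {k m : ℕ} (h : k ≤ m) : skip k m = m + 1 := if_neg h.not_gt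

theorem skip_ne (k m : ℕ) : skip k m ≠ k := by
  unfold skip
  split_ifs <;> omega

theorem skip_inj {k i j : ℕ} : skip k i = skip k j ↔ i = j := by
  unfold skip
  split_ifs <;> omega

theorem le_skip (k m : ℕ) : m ≤ skip k m := by
  unfold skip
  split_ifs <;> omega

theorem skip_le_add_one (k m : ℕ) : skip k m ≤ m + 1 := by
  unfold skip
  split_ifs <;> omega

theorem skip_pred {k n : ℕ} (hkn : k < n) : skip k (n - 1) = n := by
  rw [skip_of_le (Nat.le_sub_one_of_lt hkn), Nat.sub_add_cancel (Nat.one_le_of_lt hkn)]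

theorem skip_add_one (k m : ℕ) : skip (k + 1) (m + 1) = skip k m + 1 := by
  unfold skip
  split_ifs <;> omega

section Product

variable {M : Type*} [CommMonoid M] (f : ℕ → M) {k s j : ℕ}

theorem prod_Ico_skip_of_le_left (h : k ≤ s) :
    ∏ x ∈ Finset.Ico s j, f (skip k x) = ∏ x ∈ Finset.Ico (s + 1) (j + 1), f x := by
  rw [← Finset.prod_Ico_add' f s j 1]
  exact Finset.prod_congr rfl fun x hx => by
    rw [skip_of_le (h.trans (Finset.mem_Ico.1 hx).1)]

theorem prod_Ico_skip_of_right_le (h : j ≤ k) :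
    ∏ x ∈ Finset.Ico s j, f (skip k x) = ∏ x ∈ Finset.Ico s j, f x :=
  Finset.prod_congr rfl fun x hx => by rw [skip_of_lt ((Finset.mem_Ico.1 hx).2.trans_le h)]

theorem prod_Ico_skip (hs : s ≤ k) (hj : k ≤ j) :
    ∏ x ∈ Finset.Ico s j, f (skip k x) =
      (∏ x ∈ Finset.Ico s k, f x) * ∏ x ∈ Finset.Ico (k + 1) (j + 1), f x := by
  rw [← Finset.prod_Ico_consecutive _ hs hj, prod_Ico_skip_of_right_le f le_rfl,
    prod_Ico_skip_of_le_left f le_rfl]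

end Product

section Scan

variable {R : Type*} [CommRing R] (w : ℕ → R)

/-- The probability that a scan of `s, s + 1, …`, which stops at each `x` it reaches with
probability `w x`, stops at `j`. -/
def scanProb (s j : ℕ) : R :=
  if s ≤ j then w j * ∏ x ∈ Finset.Ico s j, (1 - w x) else 0

theorem scanProb_of_le {s j : ℕ} (h : s ≤ j) :
    scanProb w s j = w j * ∏ x ∈ Finset.Ico s j, (1 - w x) := if_pos h

theorem scanProb_of_lt {s j : ℕ} (h : j < s) : scanProb w s j = 0 := if_neg h.not_ge

theorem sum_Ico_scanProb {a s n : ℕ} (has : a ≤ s) (hsn : s ≤ n) :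
    ∑ j ∈ Finset.Ico a n, scanProb w s j = 1 - ∏ x ∈ Finset.Ico s n, (1 - w x) := by
  induction n, hsn using Nat.le_induction with
  | base =>
    rw [Finset.Ico_self, Finset.prod_empty, sub_self]
    exact Finset.sum_eq_zero fun j hj => scanProb_of_lt w (Finset.mem_Ico.1 hj).2
  | succ n hsn ih =>
    rw [Finset.sum_Ico_succ_top (has.trans hsn), Finset.prod_Ico_succ_top hsn, ih,
      scanProb_of_le w hsn]
    ring

theorem scanProb_add_scanProb_mul_scanProb {s k j : ℕ} (hsk : s ≤ k) (hkj : k < j) :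
    scanProb w s j + scanProb w s k * scanProb w (k + 1) j =
      w j * ((∏ x ∈ Finset.Ico s k, (1 - w x)) * ∏ x ∈ Finset.Ico (k + 1) j, (1 - w x)) := by
  rw [scanProb_of_le w (hsk.trans hkj.le), scanProb_of_le w hsk, scanProb_of_le w hkj,
    ← Finset.prod_Ico_consecutive _ hsk hkj.le, Finset.prod_eq_prod_Ico_succ_bot hkj]
  ring

theorem scanProb_comp_skip_of_lt {k s : ℕ} (hks : k < s) (j : ℕ) :
    scanProb (w ∘ skip k) s j = scanProb w (s + 1) (skip k j) := by
  rcases lt_or_ge j s with hjs | hsj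
  · rw [scanProb_of_lt _ hjs,
      scanProb_of_lt w ((skip_le_add_one k j).trans_lt (Nat.add_lt_add_right hjs 1))]
  · have hkj : skip k j = j + 1 := skip_of_le (hks.le.trans hsj)
    rw [scanProb_of_le _ hsj, hkj, scanProb_of_le w (Nat.add_le_add_right hsj 1),
      ← prod_Ico_skip_of_le_left _ hks.le, ← hkj]
    rfl

theorem scanProb_comp_skip_of_le {k s : ℕ} (hsk : s ≤ k) (j : ℕ) :
    scanProb (w ∘ skip k) s j =
      scanProb w s (skip k j) + scanProb w s k * scanProb w (k + 1) (skip k j) := by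
  rcases lt_or_ge j k with hjk | hkj
  · have hprod := prod_Ico_skip_of_right_le (s := s) (fun x => 1 - w x) hjk.le
    rw [skip_of_lt hjk, scanProb_of_lt w (hjk.trans (lt_add_one k)), mul_zero, add_zero]
    simp only [scanProb, Function.comp_apply, skip_of_lt hjk, hprod]
  · rw [scanProb_of_le _ (hsk.trans hkj), skip_of_le hkj,
      scanProb_add_scanProb_mul_scanProb w hsk (Nat.lt_add_one_of_le hkj),
      ← prod_Ico_skip _ hsk hkj, ← skip_of_le hkj]
    rfl

-- The start is shifted by `skip (k + 1)`, not `skip k`: a scan starting at `k` keeps its start.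
theorem scanProb_comp_skip (k s j : ℕ) :
    scanProb (w ∘ skip k) s j =
      scanProb w (skip (k + 1) s) (skip k j) +
        scanProb w (skip (k + 1) s) k * scanProb w (k + 1) (skip k j) := by
  rcases lt_or_ge k s with hks | hsk
  · rw [skip_of_le hks, scanProb_of_lt w (hks.trans (lt_add_one s)), zero_mul, add_zero,
      scanProb_comp_skip_of_lt w hks]
  · rw [skip_of_lt (Nat.lt_add_one_of_le hsk), scanProb_comp_skip_of_le w hsk]

end Scan

/-- The probability `e i` that the explicit chain starts a scan from state `i`. For `i < n` it is
`1 - P_{ii}`; a scan from state `n` may also return to `n`. -/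
noncomputable def leaveProb (n : ℕ) (θ : ℕ → ℝ) (i : ℕ) : ℝ := (θ 1 + θ n) / (θ i + θ n)

/-- The probability `w j` that a scan of the explicit chain stops at state `j` on reaching it. -/
noncomputable def stopProb (n : ℕ) (θ : ℕ → ℝ) (j : ℕ) : ℝ := 2 * θ j / (θ j + θ n)

/-- The first state scanned from state `i`; the scan is cyclic, so from `n` it begins at `1`. -/
def scanStart (n i : ℕ) : ℕ := if i = n then 1 else i + 1

theorem one_le_scanStart (n i : ℕ) : 1 ≤ scanStart n i := by
  unfold scanStart
  split_ifs <;> omega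

theorem scanStart_le {n i : ℕ} (hi : 1 ≤ i) (hin : i ≤ n) : scanStart n i ≤ n := by
  unfold scanStart
  split_ifs <;> omega

section Entries

variable {n : ℕ} {θ : ℕ → ℝ}

theorem one_sub_stopProb {j : ℕ} (h : θ j + θ n ≠ 0) :
    1 - stopProb n θ j = (θ n - θ j) / (θ j + θ n) := by
  unfold stopProb
  field_simp
  ring

theorem one_sub_leaveProb {i : ℕ} (h : θ i + θ n ≠ 0) :
    1 - leaveProb n θ i = (θ i - θ 1) / (θ i + θ n) := by
  unfold leaveProb
  field_simp
  ring

theorem stopProb_last (h : θ n + θ n ≠ 0) : stopProb n θ n = 1 := by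
  rw [stopProb, two_mul, div_self h]

theorem prod_Icc_eq_prod_one_sub_stopProb (hden : ∀ i, 1 ≤ i → i ≤ n → θ i + θ n ≠ 0)
    {s j : ℕ} (hs : 1 ≤ s) (hj : 1 ≤ j) (hjn : j ≤ n) :
    ∏ x ∈ Finset.Icc s (j - 1), (θ n - θ x) / (θ x + θ n) =
      ∏ x ∈ Finset.Ico s j, (1 - stopProb n θ x) := by
  rw [← Finset.Ico_add_one_right_eq_Icc, Nat.sub_add_cancel hj]
  refine Finset.prod_congr rfl fun x hx => ?_
  obtain ⟨hsx, hxj⟩ := Finset.mem_Ico.1 hx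
  rw [one_sub_stopProb (hden x (by omega) (by omega))]

theorem explicitAux_eq_scanProb (hden : ∀ i, 1 ≤ i → i ≤ n → θ i + θ n ≠ 0)
    {i j : ℕ} (hi : 1 ≤ i) (hin : i ≤ n) (hj : 1 ≤ j) (hjn : j < n) :
    explicitAux n θ i j = (if i = j then 1 - leaveProb n θ i else 0) +
      leaveProb n θ i * scanProb (stopProb n θ) (scanStart n i) j := by
  unfold explicitAux scanStart
  rcases eq_or_ne i n with rfl | hne
  · rw [if_pos rfl, if_pos rfl, if_neg hjn.ne', scanProb_of_le _ hj, zero_add,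
      prod_Icc_eq_prod_one_sub_stopProb hden le_rfl hj hjn.le, leaveProb, stopProb, ← mul_assoc]
    congr 1
    have hi0 := hden i hi le_rfl
    have hj0 := hden j hj hjn.le
    have hθi : θ i ≠ 0 := fun h => hi0 (by rw [h, add_zero])
    field_simp
    ring
  rw [if_neg hne, if_neg hne]
  rcases lt_trichotomy j i with hji | rfl | hij
  · rw [if_pos hji, if_neg hji.ne', scanProb_of_lt _ (hji.trans (lt_add_one i))]
    ring
  · rw [if_neg (lt_irrefl j), if_pos rfl, if_pos rfl, scanProb_of_lt _ (lt_add_one j),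
      one_sub_leaveProb (hden j hi hin)]
    ring
  · rw [if_neg hij.not_gt, if_neg hij.ne', if_neg hij.ne, scanProb_of_le _ hij, zero_add,
      prod_Icc_eq_prod_one_sub_stopProb hden (Nat.le_add_left 1 i) hj hjn.le,
      leaveProb, stopProb, ← mul_assoc, div_mul_div_comm]
    ring

theorem sum_explicitAux (hden : ∀ i, 1 ≤ i → i ≤ n → θ i + θ n ≠ 0)
    {i : ℕ} (hi : 1 ≤ i) (hin : i ≤ n) :
    ∑ j ∈ Finset.Icc 1 (n - 1), explicitAux n θ i j =
      (if i < n then 1 - leaveProb n θ i else 0) + leaveProb n θ i *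
        (1 - ∏ x ∈ Finset.Ico (scanStart n i) n, (1 - stopProb n θ x)) := by
  rw [← Finset.Ico_add_one_right_eq_Icc, Nat.sub_add_cancel (hi.trans hin),
    Finset.sum_congr rfl fun j hj => explicitAux_eq_scanProb hden hi hin
      (Finset.mem_Ico.1 hj).1 (Finset.mem_Ico.1 hj).2,
    Finset.sum_add_distrib, Finset.sum_ite_eq, ← Finset.mul_sum,
    sum_Ico_scanProb _ (one_le_scanStart n i) (scanStart_le hi hin)]
  simp only [Finset.mem_Ico, hi, true_and]

theorem explicitP_eq_scanProb (hden : ∀ i, 1 ≤ i → i ≤ n → θ i + θ n ≠ 0)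
    {i j : ℕ} (hi : 1 ≤ i) (hin : i ≤ n) (hj : 1 ≤ j) (hjn : j ≤ n) :
    explicitP n θ i j = (if i = j then 1 - leaveProb n θ i else 0) +
      leaveProb n θ i * scanProb (stopProb n θ) (scanStart n i) j := by
  unfold explicitP
  rcases hjn.lt_or_eq with hlt | rfl
  · rw [if_neg hlt.ne, explicitAux_eq_scanProb hden hi hin hj hlt]
  rw [if_pos rfl, sum_explicitAux hden hi hin, scanProb_of_le _ (scanStart_le hi hin),
    stopProb_last (hden j hj le_rfl)]
  rcases hin.lt_or_eq with hij | rfl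
  · rw [if_pos hij, if_neg hij.ne]
    ring
  · rw [if_neg (lt_irrefl i), if_pos rfl]
    ring

theorem explicitP_self (hden : ∀ i, 1 ≤ i → i ≤ n → θ i + θ n ≠ 0)
    {i : ℕ} (hi : 1 ≤ i) (hin : i < n) : explicitP n θ i i = 1 - leaveProb n θ i := by
  rw [explicitP_eq_scanProb hden hi hin.le hi hin.le, if_pos rfl, scanStart, if_neg hin.ne,
    scanProb_of_lt _ (lt_add_one i), mul_zero, add_zero]

end Entries

section Reduction

variable {n k : ℕ}

theorem leaveProb_comp_skip (θ : ℕ → ℝ) (hk : 1 < k) (hkn : k < n) (i : ℕ) :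
    leaveProb (n - 1) (θ ∘ skip k) i = leaveProb n θ (skip k i) := by
  simp only [leaveProb, Function.comp_apply, skip_of_lt hk, skip_pred hkn]

theorem stopProb_comp_skip (θ : ℕ → ℝ) (hkn : k < n) :
    stopProb (n - 1) (θ ∘ skip k) = stopProb n θ ∘ skip k := by
  funext j
  simp only [stopProb, Function.comp_apply, skip_pred hkn]

theorem scanStart_skip (hk : 0 < k) (hkn : k < n) (i : ℕ) :
    scanStart n (skip k i) = skip (k + 1) (scanStart (n - 1) i) := by
  have hlast : skip k i = n ↔ i = n - 1 := by
    simpa only [skip_pred hkn] using skip_inj (k := k) (i := i) (j := n - 1)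
  simp only [scanStart, hlast]
  split_ifs
  · rw [skip_of_lt (Nat.add_lt_add_right hk 1)]
  · rw [skip_add_one]

theorem explicitP_comp_skip {θ : ℕ → ℝ} (hden : ∀ i, 1 ≤ i → i ≤ n → θ i + θ n ≠ 0)
    (hk : 1 < k) (hkn : k < n) {i j : ℕ} (hi : 1 ≤ i) (hin : i ≤ n - 1)
    (hj : 1 ≤ j) (hjn : j ≤ n - 1) :
    explicitP n θ (skip k i) (skip k j) +
        explicitP n θ (skip k i) k * explicitP n θ k (skip k j) / (1 - explicitP n θ k k) =
      explicitP (n - 1) (θ ∘ skip k) i j := by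
  have hskip : ∀ m ≤ n - 1, skip k m ≤ n := fun m hm =>
    (skip_le_add_one k m).trans (by omega)
  have hden' : ∀ m, 1 ≤ m → m ≤ n - 1 → (θ ∘ skip k) m + (θ ∘ skip k) (n - 1) ≠ 0 := by
    intro m hm hmn
    simpa only [Function.comp_apply, skip_pred hkn] using
      hden _ (hm.trans (le_skip k m)) (hskip m hmn)
  have hleave : leaveProb n θ k ≠ 0 :=
    div_ne_zero (hden 1 le_rfl (by omega)) (hden k hk.le hkn.le)
  have hi' := hi.trans (le_skip k i)
  have hj' := hj.trans (le_skip k j)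
  rw [explicitP_self hden hk.le hkn, sub_sub_cancel,
    explicitP_eq_scanProb hden hi' (hskip i hin) hj' (hskip j hjn),
    explicitP_eq_scanProb hden hi' (hskip i hin) hk.le hkn.le,
    explicitP_eq_scanProb hden hk.le hkn.le hj' (hskip j hjn),
    explicitP_eq_scanProb hden' hi hin hj hjn,
    leaveProb_comp_skip θ hk hkn, stopProb_comp_skip θ hkn, scanProb_comp_skip,
    ← scanStart_skip hk.le hkn, if_neg (skip_ne k i), if_neg (skip_ne k j).symm]
  simp only [skip_inj, show scanStart n k = k + 1 from if_neg hkn.ne]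
  field_simp
  ring

end Reduction

theorem explicitP_ignoring_state_general {n k : ℕ} {θ : ℕ → ℝ}
    (hden : ∀ i, 1 ≤ i → i ≤ n → 0 < θ i + θ n) (hk : 1 < k) (hkn : k < n) :
    explicitP n θ k k < 1 ∧
    ∀ i j, 1 ≤ i → i ≤ n - 1 → 1 ≤ j → j ≤ n - 1 →
      explicitP n θ (skip k i) (skip k j) +
          explicitP n θ (skip k i) k * explicitP n θ k (skip k j) / (1 - explicitP n θ k k) =
        explicitP (n - 1) (θ ∘ skip k) i j := by
  have hne : ∀ i, 1 ≤ i → i ≤ n → θ i + θ n ≠ 0 := fun i hi hin => (hden i hi hin).ne'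
  have hleave : 0 < leaveProb n θ k :=
    div_pos (hden 1 le_rfl (hk.trans hkn).le) (hden k hk.le hkn.le)
  refine ⟨?_, fun i j hi hin hj hjn => explicitP_comp_skip hne hk hkn hi hin hj hjn⟩
  rw [explicitP_self hne hk.le hkn]
  exact sub_lt_self 1 hleave

/-- **Ignoring a state of the explicit irreversible chain gives the explicit chain of
the reduced score vector.** Let `n ≥ 3`, let `P = explicitP n θ` be the explicit
irreversible transition matrix built from the probability vector `θ` on states
`1, …, n`, and fix `1 < k < n`. Let `θ'` be obtained from `θ` by deleting the `k`-th
coordinate, i.e. `θ' i = θ i` for `i < k` and `θ' i = θ (i+1)` for `i ≥ k` (the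
explicit-matrix formula is homogeneous of degree 0 in `θ`, so it applies to `θ'`
without renormalization). Then `P_{kk} < 1`, and the transition matrix
`Q_{ij} = P_{ij} + P_{ik} P_{kj} / (1 − P_{kk})` of the chain obtained by ignoring
state `k` (indices identified via `ι m = m` for `m < k` and `ι m = m + 1` for
`m ≥ k`) coincides with `explicitP (n−1) θ'`. -/
theorem explicitP_ignoring_state
    (n : ℕ) (hn : 3 ≤ n) (θ : ℕ → ℝ)
    (hpos : ∀ i, 1 ≤ i → i ≤ n → 0 < θ i)
    (hmono : ∀ i j, 1 ≤ i → i ≤ j → j ≤ n → θ i ≤ θ j)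
    (hsum : ∑ i ∈ Finset.Icc 1 n, θ i = 1)
    (k : ℕ) (hk1 : 1 < k) (hkn : k < n) :
    explicitP n θ k k < 1 ∧
    (∀ i j, 1 ≤ i → i ≤ n - 1 → 1 ≤ j → j ≤ n - 1 →
      explicitP n θ (if i < k then i else i + 1) (if j < k then j else j + 1) +
        explicitP n θ (if i < k then i else i + 1) k *
          explicitP n θ k (if j < k then j else j + 1) / (1 - explicitP n θ k k) =
      explicitP (n - 1) (fun m => if m < k then θ m else θ (m + 1)) i j) := by
  simpa only [Function.comp_def, skip, apply_ite θ] using explicitP_ignoring_state_general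
    (fun i hi hin => add_pos (hpos i hi hin) (hpos n (hi.trans hin) le_rfl)) hk1 hkn
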